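/- Fix α, β > −1, a rational c ∈ (0,1), and a real number x with x < −1/2. Then, as n → ∞ through positive integers such that N := n/c is a positive integer, Q_n(x; α, β, N−1) ~ ( Γ(α+1)·Γ(N−n) / (Γ(N)·Γ(−x)·e^{n}·n^{2x+2α+2}) ) · (1+c)^{n+N+α+β+1/2} · N^{x+n+α+1}, i.e. the ratio of the two sides tends to 1. -/

import Mathlib

open Real Filter

/-- The Pochhammer symbol `(y)_k = y(y+1)⋯(y+k−1)` for a real argument. -/
noncomputable def pochR (y : ℝ) (k : ℕ) : ℝ := ∏ i ∈ Finset.range k, (y + i)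

/-- The Hahn polynomial
`Q_n(x;α,β,M) = Σ_{k=0}^n (−n)_k(−x)_k(n+α+β+1)_k / ((−M)_k(α+1)_k k!)`,
evaluated at a real argument `x`. -/
noncomputable def hahnQR (n : ℕ) (α β : ℝ) (M : ℕ) (x : ℝ) : ℝ :=
  ∑ k ∈ Finset.range (n + 1),
    pochR (-(n:ℝ)) k * pochR (-x) k * pochR ((n:ℝ) + α + β + 1) k /
      (pochR (-(M:ℝ)) k * pochR (α + 1) k * (Nat.factorial k : ℝ))

/-!
Put `a = α + β + 1`. For `1 ≤ n < N` the Hahn polynomial can be rewritten as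
`Q_n(x; α, β, N-1) = (1 / (N-n)_n) Σ_k w_k f(k)`, with
`w_k = C(n,k) (n+a)_k (N-n)_{n-k}` and `f(k) = (-x)_k / (α+1)_k`, and all the factors are positive
since `x < 0`. Three facts give the asymptotics.

* Chu–Vandermonde (`sum_polyaW`): `Σ_k w_k = (N+a)_n`, so that `w_k / (N+a)_n` is a probability
  distribution on `{0, …, n}`.
* Concentration (`polyaW_tail`): the ratio
  `w_{k+1} / w_k = (n-k)(n+a+k) / ((k+1)(N-k-1))` crosses `1` near `k = n² / N = c n` and is bounded
  away from `1` off any window `|k - c n| < δ n`; the mass outside such a window is therefore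
  exponentially small. As `f(k) ~ (Γ(α+1) / Γ(-x)) k^{-x-α-1}` is of polynomial size, its average
  is asymptotic to `(Γ(α+1) / Γ(-x)) (c n)^{-x-α-1}` (`tendsto_average`).
* Stirling (`tendsto_total`): `(N+a)_n ~ (1+c)^{n+N+a-1/2} N^n e^{-n}`.

Multiplying these, with `c n = n² / N` and `1 / (N-n)_n = Γ(N-n) / Γ(N)`, gives the claim.
-/

open Topology

/-! ### Rising factorials -/

lemma pochR_zero (y : ℝ) : pochR y 0 = 1 := by simp [pochR]

lemma pochR_succ (y : ℝ) (k : ℕ) : pochR y (k + 1) = pochR y k * (y + k) := by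
  simp [pochR, Finset.prod_range_succ]

lemma pochR_pos {y : ℝ} (hy : 0 < y) (k : ℕ) : 0 < pochR y k :=
  Finset.prod_pos fun _ _ => by positivity

lemma pochR_add (y : ℝ) (m k : ℕ) : pochR y (m + k) = pochR y m * pochR (y + m) k := by
  simp [pochR, Finset.prod_range_add, add_assoc]

lemma Gamma_add_nat {y : ℝ} (hy : 0 < y) (k : ℕ) :
    Real.Gamma (y + k) = pochR y k * Real.Gamma y := by
  induction k with
  | zero => simp [pochR_zero]
  | succ k ih =>
    rw [pochR_succ, Nat.cast_succ, ← add_assoc, Real.Gamma_add_one (by positivity), ih]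
    ring

/-! ### Pólya weights and the Chu–Vandermonde identity -/

/-- The unnormalised Pólya (negative hypergeometric) weight `C(n,k) (b)_k (d)_{n-k}`. -/
noncomputable def polyaW (n : ℕ) (b d : ℝ) (k : ℕ) : ℝ :=
  (n.choose k : ℝ) * pochR b k * pochR d (n - k)

/-- Chu–Vandermonde: rising factorials are of binomial type. -/
lemma sum_polyaW (n : ℕ) (b d : ℝ) :
    ∑ k ∈ Finset.range (n + 1), polyaW n b d k = pochR (b + d) n := by
  have key : ∀ n : ℕ, ∑ ij ∈ Finset.HasAntidiagonal.antidiagonal n,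
      (n.choose ij.1 : ℝ) * (pochR b ij.1 * pochR d ij.2) = pochR (b + d) n := by
    intro n
    induction n with
    | zero => simp [pochR_zero]
    | succ n ih =>
      rw [Finset.sum_antidiagonal_choose_succ_mul (fun i j => pochR b i * pochR d j),
        pochR_succ, ← ih, ← Finset.sum_add_distrib, Finset.sum_mul]
      refine Finset.sum_congr rfl fun ij hij => ?_
      have h : ij.1 + ij.2 = n := Finset.HasAntidiagonal.mem_antidiagonal.1 hij
      have hs : n.choose ij.2 = n.choose ij.1 := by
        rw [← h]; exact Nat.choose_symm_add.symm
      rw [pochR_succ, pochR_succ, hs, ← h]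
      push_cast
      ring
  rw [← key n, Finset.Nat.sum_antidiagonal_eq_sum_range_succ
    (fun i j => (n.choose i : ℝ) * (pochR b i * pochR d j))]
  exact Finset.sum_congr rfl fun k _ => by rw [polyaW]; ring

lemma polyaW_pos {n k : ℕ} {b d : ℝ} (hb : 0 < b) (hd : 0 < d) (hk : k ≤ n) :
    0 < polyaW n b d k := by
  have := Nat.choose_pos hk
  have := pochR_pos hb k
  have := pochR_pos hd (n - k)
  unfold polyaW
  positivity

lemma polyaW_succ {n k : ℕ} (b d : ℝ) (hk : k < n) :
    polyaW n b d (k + 1) * ((k + 1) * (d + n - k - 1)) =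
      polyaW n b d k * ((n - k) * (b + k)) := by
  obtain ⟨m, rfl⟩ : ∃ m, n = k + 1 + m := ⟨n - (k + 1), by omega⟩
  have h1 : k + 1 + m - (k + 1) = m := by omega
  have h2 : k + 1 + m - k = m + 1 := by omega
  have h3 : ((k + 1 + m).choose (k + 1) : ℝ) * (k + 1) = (k + 1 + m).choose k * (m + 1) := by
    have := Nat.choose_succ_right_eq (k + 1 + m) k
    rw [h2] at this
    exact_mod_cast this
  simp only [polyaW, h1, h2, pochR_succ]
  push_cast
  linear_combination pochR b k * (b + k) * pochR d m * (d + m) * h3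

/-- Reversal of the quotient `(-n)_k / (-(d+n-1))_k` occurring in the Hahn polynomial, in a
division-free form. -/
lemma pochR_neg_mul {n k : ℕ} (d : ℝ) (hk : k ≤ n) :
    pochR (-(n : ℝ)) k * pochR d n =
      n.choose k * k.factorial * pochR d (n - k) * pochR (-(d + n - 1)) k := by
  induction k with
  | zero => simp [pochR_zero]
  | succ k ih =>
    obtain ⟨m, rfl⟩ : ∃ m, n = k + 1 + m := ⟨n - (k + 1), by omega⟩
    have h1 : k + 1 + m - (k + 1) = m := by omega
    have h2 : k + 1 + m - k = m + 1 := by omega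
    have h3 : ((k + 1 + m).choose (k + 1) : ℝ) * (k + 1) = (k + 1 + m).choose k * (m + 1) := by
      have := Nat.choose_succ_right_eq (k + 1 + m) k
      rw [h2] at this
      exact_mod_cast this
    have ih := ih (by omega)
    rw [h2, pochR_succ] at ih
    rw [h1, pochR_succ, pochR_succ, Nat.factorial_succ]
    push_cast at ih ⊢
    linear_combination (-(k + 1 + m : ℝ) + k) * ih +
     (k.factorial * pochR d m * pochR (-(d + (k + 1 + m) - 1)) k * (d + m)) * h3

/-- The Hahn polynomial as a Pólya-weighted sum of `(-x)_k / (α+1)_k`. -/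
lemma hahnQR_eq {n N : ℕ} (hn : n < N) (α β x : ℝ) (hα : -1 < α) :
    hahnQR n α β (N - 1) x =
      (∑ k ∈ Finset.range (n + 1), polyaW n (n + α + β + 1) (N - n) k *
        (pochR (-x) k / pochR (α + 1) k)) / pochR ((N : ℝ) - n) n := by
  have hnN : (n : ℝ) < N := by exact_mod_cast hn
  have hd : (0 : ℝ) < N - n := by linarith
  rw [hahnQR, Finset.sum_div]
  refine Finset.sum_congr rfl fun k hk => ?_
  have hk : k ≤ n := by simpa [Nat.lt_succ_iff] using hk
  have h := pochR_neg_mul ((N : ℝ) - n) hk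
  have e : -((N : ℝ) - n + n - 1) = -((N - 1 : ℕ) : ℝ) := by
    rw [Nat.cast_sub (by omega)]; simp
  rw [e] at h
  have h1 := pochR_pos (show 0 < α + 1 by linarith) k
  have h2 := pochR_pos hd n
  have h3 : pochR (-((N - 1 : ℕ) : ℝ)) k ≠ 0 := by
    refine Finset.prod_ne_zero_iff.2 fun i hi => ?_
    have hi : i < N - 1 := by have := Finset.mem_range.1 hi; omega
    have : (i : ℝ) < (N - 1 : ℕ) := by exact_mod_cast hi
    linarith
  have h4 : (k.factorial : ℝ) ≠ 0 := by positivity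
  rw [polyaW, ← mul_div_assoc, div_div, div_eq_div_iff (by positivity) (by positivity)]
  linear_combination pochR (-x) k * pochR (n + α + β + 1) k * pochR (α + 1) k * h

/-! ### Concentration of the weights -/

lemma geom_up {w : ℕ → ℝ} {q : ℝ} (hq : 0 ≤ q) (k m : ℕ)
    (h : ∀ j, k ≤ j → j < k + m → w j * q ≤ w (j + 1)) : w k * q ^ m ≤ w (k + m) := by
  induction m with
  | zero => simp
  | succ m ih =>
    have h1 := ih fun j hj hj' => h j hj (by omega)
    have h2 := h (k + m) (by omega) (by omega)
    calc w k * q ^ (m + 1) = w k * q ^ m * q := by ring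
      _ ≤ w (k + m) * q := by gcongr
      _ ≤ _ := h2

lemma geom_down {w : ℕ → ℝ} {q : ℝ} (hq : 0 ≤ q) (k m : ℕ)
    (h : ∀ j, k ≤ j → j < k + m → w (j + 1) * q ≤ w j) : w (k + m) * q ^ m ≤ w k := by
  induction m with
  | zero => simp
  | succ m ih =>
    have h1 := ih fun j hj hj' => h j hj (by omega)
    have h2 := h (k + m) (by omega) (by omega)
    calc w (k + (m + 1)) * q ^ (m + 1) = w (k + m + 1) * q * q ^ m := by ring_nf
      _ ≤ w (k + m) * q ^ m := by gcongr
      _ ≤ _ := h1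

/-- Consecutive weights have ratio at least `1 + δ/6`, in the direction of `c n`, as soon as `k` is
at distance at least `δ n` from `c n`. A weight at distance at least `2 δ n` is thus smaller by the
factor `(1 + δ/6) ^ ⌊δ n⌋` than some other weight, hence than the total mass. -/
lemma polyaW_tail {c a δ : ℝ} (hc0 : 0 < c) (hc1 : c < 1) (ha : -1 < a) (hδ : 0 < δ)
    {n N k : ℕ} (hnN : (n : ℝ) = c * N) (hn1 : 1 ≤ n) (hn2 : 4 + 2 * |a| ≤ δ * n)
    (hn3 : |a| ≤ n) (hk : k ≤ n) (hkd : 2 * δ * n ≤ |(k : ℝ) - c * n|) :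
    polyaW n (n + a) (N - n) k * (1 + δ / 6) ^ ⌊δ * n⌋₊ ≤ pochR (N + a) n := by
  have hn : (1 : ℝ) ≤ n := by exact_mod_cast hn1
  have hN0 : (0 : ℝ) < N := by
    by_contra h
    nlinarith
  have hlt : (n : ℝ) < N := by nlinarith
  have hlt' : n + 1 ≤ N := by exact_mod_cast hlt
  have hlt'' : (n : ℝ) + 1 ≤ N := by exact_mod_cast hlt'
  have hd : (0 : ℝ) < N - n := by linarith
  have hb : (0 : ℝ) < n + a := by linarith
  have ha1 := le_abs_self a
  have ha2 := neg_abs_le a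
  have ha0 := abs_nonneg a
  have hle : ∀ j ≤ n, polyaW n (n + a) (N - n) j ≤ pochR (N + a) n := by
    intro j hj
    rw [show (N : ℝ) + a = (n + a) + (N - n) by ring, ← sum_polyaW]
    refine Finset.single_le_sum (f := polyaW n (n + a) (N - n)) (fun i hi => ?_)
      (Finset.mem_range.2 (by omega))
    exact (polyaW_pos hb hd (by simpa [Nat.lt_succ_iff] using hi)).le
  have hm : (⌊δ * n⌋₊ : ℝ) ≤ δ * n := Nat.floor_le (by positivity)
  have hq : (0 : ℝ) ≤ 1 + δ / 6 := by positivity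
  set m := ⌊δ * n⌋₊
  rcases le_abs'.1 hkd with h | h
  · have hkm : (k : ℝ) + m ≤ (c - δ) * n := by linarith
    have hkm' : k + m ≤ n := by
      have : ((k + m : ℕ) : ℝ) ≤ n := by push_cast; nlinarith
      exact_mod_cast this
    refine (geom_up hq k m fun j _ hj => ?_).trans (hle _ hkm')
    have hjn : j + 1 ≤ n := by omega
    have hjn' : (j : ℝ) + 1 ≤ n := by exact_mod_cast hjn
    have hj0 : (0 : ℝ) ≤ j := by positivity
    have hjc : (j : ℝ) ≤ (c - δ) * n := by
      have : ((j : ℝ)) ≤ k + m := by exact_mod_cast hj.le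
      linarith
    have hpos : (0 : ℝ) < (j + 1) * (N - n + n - j - 1) := by
      apply mul_pos <;> linarith
    have hw := polyaW_pos hb hd (show j ≤ n by omega)
    have hs := polyaW_succ (n + a) ((N : ℝ) - n) (show j < n by omega)
    refine le_of_mul_le_mul_right ?_ hpos
    rw [hs, mul_assoc]
    refine mul_le_mul_of_nonneg_left ?_ hw.le
    have e1 : (N : ℝ) * (δ * n) ≤ (n : ℝ) * n - N * j := by nlinarith
    have e2 : ((j : ℝ) + 1) * (N - n + n - j - 1) ≤ n * N := by
      apply mul_le_mul <;> linarith
    have e3 : -(n : ℝ) ≤ (n - j) * a := by nlinarith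
    have e4 : (N : ℝ) * 4 ≤ N * (δ * n) := by
      apply mul_le_mul_of_nonneg_left _ hN0.le; linarith
    linarith [mul_le_mul_of_nonneg_left e2 (show 0 ≤ δ / 6 by positivity)]
  · obtain ⟨k', rfl⟩ : ∃ k', k = k' + m := by
      refine ⟨k - m, (Nat.sub_add_cancel ?_).symm⟩
      have : (m : ℝ) ≤ k := by nlinarith
      exact_mod_cast this
    push_cast at h
    have hk' : (c + δ) * n ≤ k' := by linarith
    refine (geom_down hq k' m fun j hj hj' => ?_).trans (hle _ (by omega))
    have hjn : j + 1 ≤ n := by omega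
    have hjn' : (j : ℝ) + 1 ≤ n := by exact_mod_cast hjn
    have hj0 : (0 : ℝ) ≤ j := by positivity
    have hjc : (c + δ) * n ≤ j := hk'.trans (by exact_mod_cast hj)
    have hpos : (0 : ℝ) < (j + 1) * (N - n + n - j - 1) := by
      apply mul_pos <;> linarith
    have hw := polyaW_pos hb hd (show j ≤ n by omega)
    have hs := polyaW_succ (n + a) ((N : ℝ) - n) (show j < n by omega)
    refine le_of_mul_le_mul_right ?_ hpos
    rw [mul_right_comm, hs, mul_assoc]
    refine mul_le_mul_of_nonneg_left ?_ hw.le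
    have e1 : (N : ℝ) * (δ * n) ≤ (N : ℝ) * j - n * n := by nlinarith
    have e2 : ((n : ℝ) - j) * (n + a + j) ≤ N * (3 * n) := by
      apply mul_le_mul <;> linarith
    have e3 : (n - j) * a ≤ N * |a| := by
      apply (mul_le_mul_of_nonneg_left ha1 (by linarith)).trans
      exact mul_le_mul_of_nonneg_right (by linarith) ha0
    have e4 : (N : ℝ) * (4 + 2 * |a|) ≤ N * (δ * n) :=
      mul_le_mul_of_nonneg_left hn2 hN0.le
    linarith [mul_le_mul_of_nonneg_left e2 (show 0 ≤ δ / 6 by positivity)]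

/-! ### Asymptotics of averages along `n = c N` -/

/-- `(s)_M ~ M! M^{s-1} / Γ(s)`. -/
lemma tendsto_pochR {s : ℝ} (hs : 0 < s) :
    Tendsto (fun M : ℕ => pochR s M / ((M : ℝ) ^ (s - 1) * M.factorial)) atTop
      (𝓝 (Real.Gamma s)⁻¹) := by
  have h1 : Tendsto (fun M : ℕ => (M : ℝ) / (M + s)) atTop (𝓝 1) :=
    tendsto_natCast_div_add_atTop s
  have h2 := (Real.GammaSeq_tendsto_Gamma s).inv₀ (Real.Gamma_pos_of_pos hs).ne'
  have h3 := h1.mul h2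
  rw [one_mul] at h3
  refine h3.congr' ?_
  filter_upwards [eventually_ge_atTop 1] with M hM
  have hM' : (0 : ℝ) < M := by exact_mod_cast hM
  have e : ∏ j ∈ Finset.range (M + 1), (s + (j : ℝ)) = pochR s M * (s + M) := pochR_succ s M
  rw [Real.GammaSeq, e, Real.rpow_sub_one hM'.ne']
  have := pochR_pos hs M
  have := Real.rpow_pos_of_pos hM' s
  field_simp
  ring

/-- The filter of pairs `(n, N)` with `n = c N` and `n → ∞`. -/
noncomputable def pairs (c : ℝ) : Filter (ℕ × ℕ) :=
  comap Prod.fst atTop ⊓ 𝓟 {p | (p.1 : ℝ) = c * p.2}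

lemma pairs_fst (c : ℝ) : Tendsto (Prod.fst : ℕ × ℕ → ℕ) (pairs c) atTop :=
  tendsto_comap.mono_left inf_le_left

lemma pairs_eq (c : ℝ) : ∀ᶠ p in pairs c, (p.1 : ℝ) = c * p.2 :=
  Eventually.filter_mono inf_le_right (mem_principal_self _)

lemma pairs_snd {c : ℝ} (hc1 : c < 1) : Tendsto (Prod.snd : ℕ × ℕ → ℕ) (pairs c) atTop := by
  refine tendsto_atTop_mono' _ ?_ (pairs_fst c)
  filter_upwards [pairs_eq c] with p hp
  have : (p.1 : ℝ) ≤ p.2 := by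
    have : (0 : ℝ) ≤ p.2 := by positivity
    nlinarith
  exact_mod_cast this

lemma tendsto_poly_div_geom {q δ : ℝ} (s : ℝ) (hq : 1 < q) (hδ : 0 < δ) :
    Tendsto (fun n : ℕ => ((n : ℝ) + 1) * (n : ℝ) ^ s / q ^ ⌊δ * n⌋₊) atTop (𝓝 0) := by
  have hl : 0 < δ * Real.log q := mul_pos hδ (Real.log_pos hq)
  have h := ((tendsto_rpow_mul_exp_neg_mul_atTop_nhds_zero (s + 1) _ hl).comp
    tendsto_natCast_atTop_atTop).const_mul (2 * q)
  rw [mul_zero] at h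
  refine squeeze_zero' (Eventually.of_forall fun n => by positivity) ?_ h
  filter_upwards [eventually_ge_atTop 1] with n hn
  have hn' : (1 : ℝ) ≤ n := by exact_mod_cast hn
  have hq0 : 0 < q := by linarith
  have h1 : Real.exp (δ * Real.log q * n) ≤ q ^ ⌊δ * n⌋₊ * q := by
    rw [← pow_succ, ← Real.rpow_natCast, Real.rpow_def_of_pos hq0, Real.exp_le_exp]
    have := (Nat.lt_floor_add_one (δ * n)).le
    push_cast
    nlinarith [Real.log_pos hq]
  simp only [Function.comp]
  rw [div_le_iff₀ (by positivity), Real.rpow_add_one (by positivity), neg_mul, Real.exp_neg]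
  have hp : 0 < (n : ℝ) ^ s := Real.rpow_pos_of_pos (by positivity) s
  calc ((n : ℝ) + 1) * (n : ℝ) ^ s ≤ 2 * n * (n : ℝ) ^ s := by gcongr; linarith
    _ = 2 * ((n : ℝ) ^ s * n * (Real.exp (δ * Real.log q * n))⁻¹) *
        Real.exp (δ * Real.log q * n) := by
      field_simp
    _ ≤ 2 * ((n : ℝ) ^ s * n * (Real.exp (δ * Real.log q * n))⁻¹) * (q ^ ⌊δ * n⌋₊ * q) := by
      gcongr
    _ = _ := by ring

/-- Crude polynomial bound on the rescaled summand, used on the exponentially unlikely part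
of the range. -/
lemma crude_bound {c p L : ℝ} (hc0 : 0 < c) {f : ℕ → ℝ}
    (hf : Tendsto (fun k : ℕ => f k / (k : ℝ) ^ p) atTop (𝓝 L)) :
    ∃ D : ℝ, 0 ≤ D ∧ ∀ n k : ℕ, 1 ≤ n → k ≤ n →
      |f k / (c * n) ^ p - L| ≤ D * (n : ℝ) ^ (2 * |p|) := by
  obtain ⟨C, hC⟩ := hf.abs.bddAbove_range
  have hC : ∀ k : ℕ, |f k / (k : ℝ) ^ p| ≤ C := fun k => hC ⟨k, rfl⟩
  have hC0 : 0 ≤ C := (abs_nonneg _).trans (hC 0)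
  refine ⟨(C + |f 0|) * c ^ (-p) + |L|, by positivity, fun n k hn hk => ?_⟩
  have hn' : (1 : ℝ) ≤ n := by exact_mod_cast hn
  have hn0 : (0 : ℝ) < n := by linarith
  set y : ℝ := (n : ℝ) ^ |p|
  have hy : 1 ≤ y := Real.one_le_rpow hn' (abs_nonneg p)
  have hyy : (n : ℝ) ^ (2 * |p|) = y * y := by rw [two_mul, Real.rpow_add hn0]
  have h1 : |f k| ≤ (C + |f 0|) * y := by
    rcases Nat.eq_zero_or_pos k with rfl | hk0
    · nlinarith [abs_nonneg (f 0)]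
    · have hk1 : (1 : ℝ) ≤ k := by exact_mod_cast hk0
      have hkp : 0 < (k : ℝ) ^ p := Real.rpow_pos_of_pos (by linarith) p
      have h2 : (k : ℝ) ^ p ≤ y :=
        (Real.rpow_le_rpow_of_exponent_le hk1 (le_abs_self p)).trans
          (Real.rpow_le_rpow (by linarith) (by exact_mod_cast hk) (abs_nonneg p))
      have h3 := hC k
      rw [abs_div, abs_of_pos hkp, div_le_iff₀ hkp] at h3
      nlinarith [abs_nonneg (f 0)]
  have h4 : ((c * n) ^ p)⁻¹ ≤ c ^ (-p) * y := by
    rw [← Real.rpow_neg (by positivity), Real.mul_rpow hc0.le hn0.le]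
    gcongr
    exact Real.rpow_le_rpow_of_exponent_le hn' (neg_le_abs p)
  have h5 : 0 < (c * n) ^ p := by positivity
  have hcp : 0 < c ^ (-p) := Real.rpow_pos_of_pos hc0 _
  rw [hyy]
  calc |f k / (c * n) ^ p - L| ≤ |f k / (c * n) ^ p| + |L| := abs_sub _ _
    _ = |f k| * ((c * n) ^ p)⁻¹ + |L| := by rw [abs_div, abs_of_pos h5, div_eq_mul_inv]
    _ ≤ (C + |f 0|) * y * (c ^ (-p) * y) + |L| * (y * y) := by
      gcongr
      exact le_mul_of_one_le_right (abs_nonneg _) (by nlinarith)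
    _ = _ := by ring

/-- Law of large numbers for the Pólya weights: if `f k ~ L k^p`, then the weighted average of `f`
is asymptotic to `L (c n)^p`. -/
lemma tendsto_average {c a p L : ℝ} (hc0 : 0 < c) (hc1 : c < 1) (ha : -1 < a) {f : ℕ → ℝ}
    (hf : Tendsto (fun k : ℕ => f k / (k : ℝ) ^ p) atTop (𝓝 L)) :
    Tendsto (fun q : ℕ × ℕ => (∑ k ∈ Finset.range (q.1 + 1),
      polyaW q.1 (q.1 + a) (q.2 - q.1) k * f k) / pochR (q.2 + a) q.1 / (c * q.1) ^ p)
      (pairs c) (𝓝 L) := by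
  rw [Metric.tendsto_nhds]
  intro ε hε
  have hprod : Tendsto (fun z : ℕ × ℝ => f z.1 / (z.1 : ℝ) ^ p * z.2 ^ p)
      (atTop ×ˢ 𝓝 1) (𝓝 L) := by
    have h1 : Tendsto (fun u : ℝ => u ^ p) (𝓝 1) (𝓝 1) := by
      have := Real.continuousAt_rpow_const 1 p (Or.inl one_ne_zero)
      simpa [ContinuousAt] using this
    simpa using (hf.comp tendsto_fst).mul (h1.comp tendsto_snd)
  obtain ⟨pa, hpa, pb, hpb, hab⟩ := eventually_prod_iff.1
    (Metric.tendsto_nhds.1 hprod (ε / 2) (by positivity))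
  obtain ⟨K, hK⟩ := eventually_atTop.1 hpa
  obtain ⟨δ', hδ', hball⟩ := Metric.eventually_nhds_iff.1 hpb
  obtain ⟨D, hD0, hD⟩ := crude_bound hc0 hf
  -- `|k - c n| < 2 δ n` forces both `|k / (c n) - 1| < δ'` and `k ≥ c n / 2`
  set δ : ℝ := c * min δ' 1 / 4 with hδdef
  have hmin : 0 < min δ' 1 := lt_min hδ' one_pos
  have hδ : 0 < δ := by positivity
  have hδ1 : 2 * δ ≤ c / 2 := by
    have := min_le_right δ' 1
    nlinarith
  have hδ2 : 2 * δ < c * δ' := by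
    have := min_le_left δ' 1
    nlinarith
  have htail := (tendsto_poly_div_geom (q := 1 + δ / 6) (2 * |p|) (by linarith) hδ).const_mul D
  rw [mul_zero] at htail
  have hcast : Tendsto (fun q : ℕ × ℕ => (q.1 : ℝ)) (pairs c) atTop :=
    tendsto_natCast_atTop_atTop.comp (pairs_fst c)
  filter_upwards [pairs_eq c, (pairs_fst c).eventually (eventually_ge_atTop 1),
    (hcast.const_mul_atTop hδ).eventually (eventually_ge_atTop (4 + 2 * |a|)),
    hcast.eventually (eventually_ge_atTop |a|),
    (hcast.const_mul_atTop (half_pos hc0)).eventually (eventually_ge_atTop ((K : ℝ) + 1)),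
    (pairs_fst c).eventually (htail.eventually (gt_mem_nhds (half_pos hε)))]
    with ⟨n, N⟩ hnN hn1 hn2 hn3 hn4 hn5
  dsimp only at *
  have hn : (1 : ℝ) ≤ n := by exact_mod_cast hn1
  have hN0 : (0 : ℝ) < N := by
    by_contra h
    nlinarith
  have hlt : (n : ℝ) < N := by nlinarith
  have hlt' : (n : ℝ) + 1 ≤ N := by exact_mod_cast (by exact_mod_cast hlt : n + 1 ≤ N)
  have hd : (0 : ℝ) < N - n := by linarith
  have hb : (0 : ℝ) < n + a := by linarith
  set w := polyaW n (n + a) (N - n)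
  set W := pochR (N + a) n
  have hW : 0 < W := pochR_pos (by linarith) n
  have hsum : ∑ k ∈ Finset.range (n + 1), w k = W := by
    rw [sum_polyaW]; congr 1; ring
  set P : ℝ := (c * n) ^ p
  have hP : 0 < P := by positivity
  set E : ℝ := D * (n : ℝ) ^ (2 * |p|) / (1 + δ / 6) ^ ⌊δ * n⌋₊ with hE
  have hE0 : 0 ≤ E := by positivity
  have hterm : ∀ k ∈ Finset.range (n + 1), w k * |f k / P - L| ≤ w k * (ε / 2) + W * E := by
    intro k hk
    have hk : k ≤ n := by simpa [Nat.lt_succ_iff] using hk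
    have hwk : 0 < w k := polyaW_pos hb hd hk
    by_cases hkd : 2 * δ * n ≤ |(k : ℝ) - c * n|
    · have h1 := polyaW_tail hc0 hc1 ha hδ hnN hn1 hn2 hn3 hk hkd
      have h2 : w k ≤ W / (1 + δ / 6) ^ ⌊δ * n⌋₊ := (le_div_iff₀ (by positivity)).2 h1
      calc w k * |f k / P - L| ≤ W / (1 + δ / 6) ^ ⌊δ * n⌋₊ * (D * (n : ℝ) ^ (2 * |p|)) :=
            mul_le_mul h2 (hD n k hn1 hk) (abs_nonneg _) (by positivity)
        _ = W * E := by rw [hE]; ring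
        _ ≤ _ := le_add_of_nonneg_left (by positivity)
    · push Not at hkd
      have hcn : 0 < c * n := by positivity
      have hkK : (K : ℝ) + 1 ≤ k := by
        have := (abs_lt.1 hkd).1
        nlinarith
      have hk0 : (0 : ℝ) < k := by
        have : (0 : ℝ) ≤ K := by positivity
        linarith
      have hu : dist ((k : ℝ) / (c * n)) 1 < δ' := by
        rw [Real.dist_eq, div_sub_one hcn.ne', abs_div, abs_of_pos hcn, div_lt_iff₀ hcn]
        nlinarith
      have h3 := hab (hK k (by exact_mod_cast (by linarith : (K : ℝ) ≤ k))) (hball hu)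
      have h4 : f k / (k : ℝ) ^ p * ((k : ℝ) / (c * n)) ^ p = f k / P := by
        rw [Real.div_rpow hk0.le hcn.le]
        have : (0 : ℝ) < (k : ℝ) ^ p := by positivity
        field_simp
        rfl
      rw [h4, Real.dist_eq] at h3
      have : w k * |f k / P - L| ≤ w k * (ε / 2) := by gcongr
      have : 0 ≤ W * E := by positivity
      linarith
  have hrw : (∑ k ∈ Finset.range (n + 1), w k * f k) / W / P - L =
      (∑ k ∈ Finset.range (n + 1), w k * (f k / P - L)) / W := by
    have : ∑ k ∈ Finset.range (n + 1), w k * (f k / P - L) =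
        (∑ k ∈ Finset.range (n + 1), w k * f k) / P - W * L := by
      rw [← hsum, Finset.sum_div, Finset.sum_mul, ← Finset.sum_sub_distrib]
      exact Finset.sum_congr rfl fun k _ => by ring
    rw [this]
    field_simp
  rw [Real.dist_eq, hrw, abs_div, abs_of_pos hW, div_lt_iff₀ hW]
  calc |∑ k ∈ Finset.range (n + 1), w k * (f k / P - L)|
      ≤ ∑ k ∈ Finset.range (n + 1), w k * |f k / P - L| := by
        refine (Finset.abs_sum_le_sum_abs _ _).trans_eq (Finset.sum_congr rfl fun k hk => ?_)
        rw [abs_mul, abs_of_pos (polyaW_pos hb hd (by simpa [Nat.lt_succ_iff] using hk))]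
    _ ≤ ∑ k ∈ Finset.range (n + 1), (w k * (ε / 2) + W * E) := Finset.sum_le_sum hterm
    _ = W * (ε / 2) + W * (D * (((n : ℝ) + 1) * (n : ℝ) ^ (2 * |p|) /
          (1 + δ / 6) ^ ⌊δ * n⌋₊)) := by
        rw [Finset.sum_add_distrib, ← Finset.sum_mul, hsum, Finset.sum_const, Finset.card_range,
          nsmul_eq_mul, hE]
        push_cast
        ring
    _ < W * (ε / 2) + W * (ε / 2) := by gcongr
    _ = ε * W := by ring

/-! ### The normalising constant -/

/-- Stirling's formula for the normalising constant `(N+a)_n` along `n = c N`. -/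
lemma tendsto_total {c a : ℝ} (hc0 : 0 < c) (hc1 : c < 1) (ha : -1 < a) :
    Tendsto (fun q : ℕ × ℕ => pochR (q.2 + a) q.1 /
      ((1 + c) ^ ((q.1 : ℝ) + q.2 + a - 1 / 2) * (q.2 : ℝ) ^ q.1 * Real.exp (-q.1)))
      (pairs c) (𝓝 1) := by
  have hs : 0 < a + 1 := by linarith
  have hN := pairs_snd hc1
  have hNn : Tendsto (fun q : ℕ × ℕ => q.2 + q.1) (pairs c) atTop :=
    tendsto_atTop_mono (fun q => Nat.le_add_right _ _) hN
  have hg0 : (Real.Gamma (a + 1))⁻¹ ≠ 0 := inv_ne_zero (Real.Gamma_pos_of_pos hs).ne'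
  have hg := ((tendsto_pochR hs).comp hNn).div ((tendsto_pochR hs).comp hN) hg0
  have hπ : √π ≠ 0 := (Real.sqrt_pos.2 Real.pi_pos).ne'
  have hst := (Stirling.tendsto_stirlingSeq_sqrt_pi.comp hNn).div
    (Stirling.tendsto_stirlingSeq_sqrt_pi.comp hN) hπ
  have h1 : ∀ b : ℝ, Tendsto (fun M : ℕ => (M : ℝ) / (M + b)) atTop (𝓝 1) :=
    fun b => tendsto_natCast_div_add_atTop b
  have hr := ((h1 a).comp hNn).div ((h1 a).comp hN) one_ne_zero
  rw [div_self hg0] at hg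
  rw [div_self hπ] at hst
  rw [div_self one_ne_zero] at hr
  have hall := (hr.mul hg).mul hst
  rw [one_mul, one_mul] at hall
  refine hall.congr' ?_
  filter_upwards [pairs_eq c, hN.eventually (eventually_ge_atTop 2)] with ⟨n, N⟩ hnN hN2
  simp only [Function.comp, Pi.div_apply] at *
  have hX : (2 : ℝ) ≤ N := by exact_mod_cast hN2
  have hX0 : (0 : ℝ) < N := by linarith
  set T : ℝ := 1 + c with hT
  have hT0 : 0 < T := by linarith
  have hTX : ((N + n : ℕ) : ℝ) = T * N := by push_cast; rw [hnN, hT]; ring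
  have hNa : (0 : ℝ) < N + a := by linarith
  have hTa : 0 < T * N + a := by nlinarith
  -- shifting the base by one makes it positive, so that `tendsto_pochR` applies for all `a > -1`
  have hshift : pochR (N + a) n * ((T * N + a) * pochR (a + 1) N) =
      (N + a) * pochR (a + 1) (N + n) := by
    have e1 := pochR_succ (N + a) n
    have e2 : pochR (N + a) (n + 1) = (N + a) * pochR (N + a + 1) n := by
      rw [add_comm n 1, pochR_add]
      simp [pochR]
    have e3 := pochR_add (a + 1) N n
    have e4 : (N : ℝ) + n = T * N := by exact_mod_cast hTX
    rw [show a + 1 + (N : ℝ) = N + a + 1 by ring] at e3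
    rw [e3, ← e4]
    linear_combination pochR (a + 1) N * (e2 - e1)
  have hp : pochR (N + a) n =
      (N + a) * pochR (a + 1) (N + n) / ((T * N + a) * pochR (a + 1) N) := by
    rw [eq_div_iff, hshift]
    exact (mul_pos hTa (pochR_pos hs N)).ne'
  have q1 := pochR_pos hs N
  have q2 := pochR_pos hs (N + n)
  have hexp : T ^ ((n : ℝ) + N + a - 1 / 2) = T ^ (N + n) * T ^ a * √T / T := by
    rw [show (n : ℝ) + N + a - 1 / 2 = ((N + n : ℕ) : ℝ) + a + 1 / 2 - 1 by push_cast; ring,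
      Real.rpow_sub_one hT0.ne', Real.rpow_add hT0, Real.rpow_add hT0, Real.rpow_natCast,
      Real.sqrt_eq_rpow]
  have hsq : √(2 * (T * N)) = √T * √(2 * N) := by
    rw [← Real.sqrt_mul hT0.le]; congr 1; ring
  have hE : Real.exp (-n) * Real.exp 1 ^ n = 1 := by
    rw [← Real.exp_nat_mul, ← Real.exp_add]; simp
  have hTp : 0 < T ^ a := Real.rpow_pos_of_pos hT0 a
  have hNp : 0 < (N : ℝ) ^ a := Real.rpow_pos_of_pos hX0 a
  have hsT : 0 < √T := Real.sqrt_pos.2 hT0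
  have hsN : 0 < √(2 * (N : ℝ)) := Real.sqrt_pos.2 (by positivity)
  have hf1 : (N.factorial : ℝ) ≠ 0 := by positivity
  have hf2 : ((N + n).factorial : ℝ) ≠ 0 := by positivity
  have hee : Real.exp (-n) = (Real.exp 1 ^ n)⁻¹ := eq_inv_of_mul_eq_one_left hE
  rw [hp, hexp, Stirling.stirlingSeq, Stirling.stirlingSeq, hTX, hsq, add_sub_cancel_right,
    Real.mul_rpow hT0.le hX0.le, hee, div_pow, div_pow, mul_pow, pow_add (N : ℝ),
    pow_add (Real.exp 1)]
  field_simp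

/-! ### The asymptotic formula -/

/-- for fixed `α, β > −1`, rational `c ∈ (0,1)`, and fixed real
`x < −1/2`, as `n → ∞` with `N = n/c ∈ ℕ`,
`Q_n(x;α,β,N−1) ~ (Γ(α+1)Γ(N−n)/(Γ(N)Γ(−x) e^n n^{2x+2α+2})) (1+c)^{n+N+α+β+1/2}
N^{x+n+α+1}`, in the sense that the ratio tends to `1`. -/
theorem hahn_fixed_x_asymptotics_left
    (α β : ℝ) (hα : -1 < α) (hβ : -1 < β)
    (c : ℚ) (hc0 : 0 < c) (hc1 : c < 1)
    (x : ℝ) (hx : x < -(1/2 : ℝ))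
    (R : ℕ → ℕ → ℝ)
    (hR : ∀ n N : ℕ, R n N =
      (Real.Gamma (α + 1) * Real.Gamma ((N:ℝ) - (n:ℝ)) /
          (Real.Gamma (N:ℝ) * Real.Gamma (-x) * Real.exp (n:ℝ) * (n:ℝ) ^ (2*x + 2*α + 2))) *
        (1 + (c:ℝ)) ^ ((n:ℝ) + (N:ℝ) + α + β + 1/2) *
        (N:ℝ) ^ (x + (n:ℝ) + α + 1)) :
    ∀ ε : ℝ, 0 < ε → ∃ n₀ : ℕ, ∀ n N : ℕ, n₀ ≤ n → (n : ℚ) = c * (N : ℚ) →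
      |hahnQR n α β (N - 1) x / R n N - 1| < ε := by
  have hc0' : (0 : ℝ) < c := by exact_mod_cast hc0
  have hc1' : (c : ℝ) < 1 := by exact_mod_cast hc1
  have hx0 : 0 < -x := by linarith
  have hα0 : 0 < α + 1 := by linarith
  have ha : -1 < α + β + 1 := by linarith
  have hG1 := Real.Gamma_pos_of_pos hx0
  have hG2 := Real.Gamma_pos_of_pos hα0
  set L : ℝ := Real.Gamma (α + 1) / Real.Gamma (-x) with hL
  have hL0 : 0 < L := div_pos hG2 hG1
  have hf : Tendsto (fun k : ℕ => pochR (-x) k / pochR (α + 1) k / (k : ℝ) ^ (-x - α - 1))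
      atTop (𝓝 L) := by
    have h := (tendsto_pochR hx0).div (tendsto_pochR hα0) (inv_ne_zero hG2.ne')
    rw [inv_div_inv] at h
    refine h.congr' ?_
    filter_upwards [eventually_ge_atTop 1] with k hk
    have hk' : (0 : ℝ) < k := by exact_mod_cast hk
    have e : (k : ℝ) ^ (-x - 1) = (k : ℝ) ^ (-x - α - 1) * (k : ℝ) ^ (α + 1 - 1) := by
      rw [← Real.rpow_add hk']; congr 1; ring
    have := pochR_pos hx0 k
    have := pochR_pos hα0 k
    have : (k.factorial : ℝ) ≠ 0 := by positivity
    rw [Pi.div_apply, e]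
    have := Real.rpow_pos_of_pos hk' (-x - α - 1)
    have := Real.rpow_pos_of_pos hk' (α + 1 - 1)
    field_simp
  have hmain : Tendsto (fun q : ℕ × ℕ => hahnQR q.1 α β (q.2 - 1) x / R q.1 q.2)
      (pairs c) (𝓝 1) := by
    have h := ((tendsto_average hc0' hc1' ha hf).div_const L).mul (tendsto_total hc0' hc1' ha)
    rw [div_self hL0.ne', one_mul] at h
    refine h.congr' ?_
    filter_upwards [pairs_eq c, (pairs_fst c).eventually (eventually_ge_atTop 1)]
      with ⟨n, N⟩ hnN hn1
    dsimp only at *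
    have hn : (0 : ℝ) < n := by exact_mod_cast hn1
    have hN0 : (0 : ℝ) < N := by
      by_contra h
      nlinarith
    have hlt : (n : ℝ) < N := by nlinarith
    have hd : (0 : ℝ) < N - n := by linarith
    have hΓ : Real.Gamma N = pochR ((N : ℝ) - n) n * Real.Gamma ((N : ℝ) - n) := by
      rw [← Gamma_add_nat hd]; congr 1; ring
    have hW : 0 < pochR ((N : ℝ) + (α + β + 1)) n := pochR_pos (by
      have : (1 : ℝ) ≤ n := by exact_mod_cast hn1
      linarith) n
    have hdp := pochR_pos hd n
    have hGd := Real.Gamma_pos_of_pos hd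
    -- `c n = n ^ 2 / N`
    have hcn : ((c : ℝ) * n) ^ (-x - α - 1) =
        ((n : ℝ) ^ (2 * x + 2 * α + 2))⁻¹ * (N : ℝ) ^ (x + α + 1) := by
      rw [show (c : ℝ) * n = (n : ℝ) ^ (2 : ℝ) * (N : ℝ) ^ (-1 : ℝ) by
          rw [Real.rpow_two, Real.rpow_neg_one, eq_mul_inv_iff_mul_eq₀ hN0.ne']
          linear_combination (-(n : ℝ)) * hnN,
        Real.mul_rpow (by positivity) (by positivity), ← Real.rpow_mul hn.le,
        ← Real.rpow_mul hN0.le, ← Real.rpow_neg hn.le]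
      congr 2 <;> ring
    have hNp : (N : ℝ) ^ (x + n + α + 1) = (N : ℝ) ^ (x + α + 1) * (N : ℝ) ^ n := by
      rw [← Real.rpow_natCast, ← Real.rpow_add hN0]; congr 1; ring
    rw [hahnQR_eq (by exact_mod_cast hlt) α β x hα, hR, hΓ, hNp, hcn, hL, Real.exp_neg,
      show (n : ℝ) + N + (α + β + 1) - 1 / 2 = n + N + α + β + 1 / 2 by ring,
      show (n : ℝ) + (α + β + 1) = n + α + β + 1 by ring]
    have := Real.rpow_pos_of_pos hn (2 * x + 2 * α + 2)
    have := Real.rpow_pos_of_pos hN0 (x + α + 1)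
    have := Real.rpow_pos_of_pos (show (0 : ℝ) < 1 + c by linarith) (n + N + α + β + 1 / 2)
    generalize (∑ k ∈ Finset.range (n + 1), polyaW n (n + α + β + 1) (N - n) k *
      (pochR (-x) k / pochR (α + 1) k)) = S
    field_simp
  intro ε hε
  have h := Metric.tendsto_nhds.1 hmain ε hε
  rw [pairs, eventually_inf_principal, eventually_comap] at h
  obtain ⟨n₀, hn₀⟩ := eventually_atTop.1 h
  refine ⟨n₀, fun n N hn hnN => ?_⟩
  have := hn₀ n hn (n, N) rfl (show (n : ℝ) = c * N by exact_mod_cast hnN)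
  rwa [Real.dist_eq] at this
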